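/- For every n ≥ 2, the Abelianisation J_n/[J_n, J_n] of the cactus group J_n is isomorphic to (ℤ/2ℤ)^{n−1}. -/

import Mathlib

/-- Generators of the cactus group `J n`: pairs `(p, q)` with `1 ≤ p < q ≤ n`. -/
abbrev CactusGen (n : ℕ) := {pq : ℕ × ℕ // 1 ≤ pq.1 ∧ pq.1 < pq.2 ∧ pq.2 ≤ n}

/-- The defining relators of the standard presentation of the cactus group `J n`:
`σ_{p,q}² = 1`; `σ_{p,q}σ_{r,s} = σ_{r,s}σ_{p,q}` when `[p,q] ∩ [r,s] = ∅`;
and `σ_{p,q}σ_{r,s} = σ_{p+q-s,p+q-r}σ_{p,q}` when `[r,s] ⊆ [p,q]`. -/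
def cactusRels (n : ℕ) : Set (FreeGroup (CactusGen n)) :=
  { w | (∃ g : CactusGen n, w = FreeGroup.of g ^ 2) ∨
    (∃ g h : CactusGen n, (g.1.2 < h.1.1 ∨ h.1.2 < g.1.1) ∧
      w = FreeGroup.of g * FreeGroup.of h * (FreeGroup.of h * FreeGroup.of g)⁻¹) ∨
    (∃ g h k : CactusGen n, g.1.1 ≤ h.1.1 ∧ h.1.2 ≤ g.1.2 ∧
      k.1.1 = g.1.1 + g.1.2 - h.1.2 ∧ k.1.2 = g.1.1 + g.1.2 - h.1.1 ∧
      w = FreeGroup.of g * FreeGroup.of h * (FreeGroup.of k * FreeGroup.of g)⁻¹) }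

/-- The cactus group `J n`, as a presented group. -/
abbrev CactusGroup (n : ℕ) := PresentedGroup (cactusRels n)

/-- The generator `σ_{p,q}` of the cactus group `J n` (junk value `1` for invalid indices). -/
def cactusσ (n p q : ℕ) : CactusGroup n :=
  if h : 1 ≤ p ∧ p < q ∧ q ≤ n then PresentedGroup.of ⟨(p, q), h⟩ else 1

/-- The hom to `(ℤ/2)^(n-1)` sends `σ_{p,q}` to the basis vector of index `q-p-1`. -/
def cactusVec (n : ℕ) (g : CactusGen n) : Multiplicative (Fin (n - 1) → ZMod 2) :=
  Multiplicative.ofAdd (Pi.single ⟨g.1.2 - g.1.1 - 1, by have := g.2; omega⟩ 1)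

theorem cactusVec_sq (n : ℕ) (v : Multiplicative (Fin (n - 1) → ZMod 2)) : v ^ 2 = 1 := by
  apply Multiplicative.toAdd.injective
  funext i
  change (2 • (Multiplicative.toAdd v)) i = 0
  rw [Pi.smul_apply, two_nsmul]
  exact CharTwo.add_self_eq_zero _

theorem cactusVec_rels (n : ℕ) : ∀ r ∈ cactusRels n, FreeGroup.lift (cactusVec n) r = 1 := by
  rintro r (⟨g, rfl⟩ | ⟨g, h, -, rfl⟩ | ⟨g, h, k, h1, h2, h3, h4, rfl⟩)
  · rw [map_pow]
    exact cactusVec_sq n _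
  · rw [map_mul, map_inv, mul_inv_eq_one, map_mul, map_mul, mul_comm]
  · have hk : cactusVec n h = cactusVec n k := by
      unfold cactusVec
      have := g.2
      have := h.2
      have e : h.1.2 - h.1.1 - 1 = k.1.2 - k.1.1 - 1 := by omega
      simp only [e]
    rw [map_mul, map_inv, mul_inv_eq_one, map_mul, map_mul, mul_comm]
    simp [hk]

/-- The forward homomorphism. -/
def cactusFwd (n : ℕ) :
    Abelianization (CactusGroup n) →* Multiplicative (Fin (n - 1) → ZMod 2) :=
  Abelianization.lift (PresentedGroup.toGroup (cactusVec_rels n))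

/-- Class of a generator in the abelianisation. -/
def cactusCls (n : ℕ) (g : CactusGen n) : Abelianization (CactusGroup n) :=
  Abelianization.of (PresentedGroup.of g)

theorem cactusFwd_cls (n : ℕ) (g : CactusGen n) : cactusFwd n (cactusCls n g) = cactusVec n g := by
  simp [cactusFwd, cactusCls]

theorem cactusCls_sq (n : ℕ) (g : CactusGen n) : cactusCls n g ^ 2 = 1 := by
  have h : (PresentedGroup.mk (cactusRels n)) (FreeGroup.of g ^ 2) = 1 :=
    PresentedGroup.one_of_mem (Or.inl ⟨g, rfl⟩)
  have := congrArg Abelianization.of h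
  rw [map_pow, map_pow, map_one] at this
  exact this

theorem cactusCls_eq (n : ℕ) (g h k : CactusGen n) (h1 : g.1.1 ≤ h.1.1) (h2 : h.1.2 ≤ g.1.2)
    (h3 : k.1.1 = g.1.1 + g.1.2 - h.1.2) (h4 : k.1.2 = g.1.1 + g.1.2 - h.1.1) :
    cactusCls n h = cactusCls n k := by
  have h : (PresentedGroup.mk (cactusRels n))
      (FreeGroup.of g * FreeGroup.of h * (FreeGroup.of k * FreeGroup.of g)⁻¹) = 1 :=
    PresentedGroup.one_of_mem (Or.inr (Or.inr ⟨g, h, k, h1, h2, h3, h4, rfl⟩))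
  have := congrArg Abelianization.of h
  simp only [map_mul, map_inv, map_one] at this
  rw [mul_inv_eq_one, mul_comm] at this
  exact mul_right_cancel this

/-- The generator `σ_{1,i+2}`. -/
def cactusStd (n : ℕ) (i : Fin (n - 1)) : CactusGen n :=
  ⟨(1, i.1 + 2), by have := i.2; simp only; omega⟩

/-- The backward homomorphism, additively. -/
def cactusBwdAdd (n : ℕ) : (Fin (n - 1) → ZMod 2) →+ Additive (Abelianization (CactusGroup n)) :=
  ∑ i, (ZMod.lift 2 ⟨zmultiplesHom _ (Additive.ofMul (cactusCls n (cactusStd n i))), by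
    have := congrArg Additive.ofMul (cactusCls_sq n (cactusStd n i))
    rw [ofMul_pow] at this
    rw [zmultiplesHom_apply]
    exact_mod_cast this⟩).comp (Pi.evalAddMonoidHom _ i)

theorem cactusBwdAdd_single (n : ℕ) (i : Fin (n - 1)) :
    cactusBwdAdd n (Pi.single i 1) = Additive.ofMul (cactusCls n (cactusStd n i)) := by
  unfold cactusBwdAdd
  rw [AddMonoidHom.finsetSum_apply, Finset.sum_eq_single i]
  · simp only [AddMonoidHom.comp_apply, Pi.evalAddMonoidHom_apply, Pi.single_eq_same]
    rw [show (1 : ZMod 2) = ((1 : ℤ) : ZMod 2) by simp, ZMod.lift_coe]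
    simp
  · intro j _ hj
    simp [Pi.single_eq_of_ne hj]
  · simp

theorem cactusBwd_vec (n : ℕ) (g : CactusGen n) :
    (cactusBwdAdd n (Multiplicative.toAdd (cactusVec n g))).toMul = cactusCls n g := by
  unfold cactusVec
  rw [toAdd_ofAdd, cactusBwdAdd_single, toMul_ofMul]
  have hg := g.2
  symm
  apply cactusCls_eq n ⟨(1, g.1.2), by simp only; omega⟩ g
  · exact hg.1
  · exact le_rfl
  · simp [cactusStd]
  · simp only [cactusStd]; omega

/-- The backward homomorphism. -/
def cactusBwd (n : ℕ) :
    Multiplicative (Fin (n - 1) → ZMod 2) →* Abelianization (CactusGroup n) where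
  toFun v := (cactusBwdAdd n (Multiplicative.toAdd v)).toMul
  map_one' := by simp
  map_mul' v w := by simp

theorem cactus_left (n : ℕ) : (cactusBwd n).comp (cactusFwd n) = MonoidHom.id _ := by
  apply Abelianization.hom_ext
  apply PresentedGroup.ext
  intro g
  change cactusBwd n (cactusFwd n (cactusCls n g)) = cactusCls n g
  rw [cactusFwd_cls]
  exact cactusBwd_vec n g

theorem cactus_right_single (n : ℕ) (i : Fin (n - 1)) :
    cactusFwd n (cactusBwd n (Multiplicative.ofAdd (Pi.single i 1))) =
      Multiplicative.ofAdd (Pi.single i 1) := by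
  change cactusFwd n ((cactusBwdAdd n (Pi.single i 1)).toMul) = _
  rw [cactusBwdAdd_single, toMul_ofMul, cactusFwd_cls]
  rfl

theorem cactus_right (n : ℕ) (v : Fin (n - 1) → ZMod 2) :
    cactusFwd n (cactusBwd n (Multiplicative.ofAdd v)) = Multiplicative.ofAdd v := by
  have key : (MonoidHom.toAdditive ((cactusFwd n).comp (cactusBwd n))).comp
      (AddEquiv.additiveMultiplicative (Fin (n - 1) → ZMod 2)).symm.toAddMonoidHom =
      (AddEquiv.additiveMultiplicative (Fin (n - 1) → ZMod 2)).symm.toAddMonoidHom := by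
    apply AddMonoidHom.functions_ext
    intro i x
    have hx : x = 0 ∨ x = 1 := by revert x; decide
    rcases hx with rfl | rfl
    · rw [Pi.single_zero, map_zero, map_zero]
    · exact cactus_right_single n i
  exact DFunLike.congr_fun key v

/-- For every `n ≥ 2`, the Abelianisation of the cactus group `J_n` is isomorphic to
`(ℤ/2ℤ)^{n-1}`. -/
theorem cactus_abelianization (n : ℕ) (hn : 2 ≤ n) :
    Nonempty (Abelianization (CactusGroup n) ≃* Multiplicative (Fin (n - 1) → ZMod 2)) := by
  exact ⟨MonoidHom.toMulEquiv (cactusFwd n) (cactusBwd n) (cactus_left n)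
    (MonoidHom.ext fun v => cactus_right n v)⟩
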